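/- Let h_1, h_2, h_3 and g_{ij} (1 ≤ i,j ≤ 3) be continuous functions on T satisfying the Volterra relations h_i(x,ξ) = −θ_i(ξ) m_4(x,ξ) − ∫_ξ^x m_4(x,s) h_i(s,ξ) ds and g_{ij}(x,ξ) = −θ_j(ξ) m_i(x,ξ) − ∫_ξ^x m_i(x,s) h_j(s,ξ) ds. Let (ψ̃_1, ψ̃_2, ψ̃_3, χ̃) be a C¹ solution on [0,∞)×[0,L] of the observer target system: ∂_t ψ̃_i + γ_i ∂_x ψ̃_i = Σ_{j=1}^3 σ_{ij} ψ̃_j + Σ_{j=1}^3 ∫_0^x g_{ij}(x,ξ) ψ̃_j(t,ξ) dξ for i = 1,2,3, ∂_t χ̃ − μ ∂_x χ̃ = Σ_{j=1}^3 θ_j(x) ψ̃_j + Σ_{j=1}^3 ∫_0^x h_j(x,ξ) ψ̃_j(t,ξ) dξ, with ψ̃_i(t,0) = 0 and χ̃(t,L) = ρ_1 ψ̃_1(t,L) + ρ_2 ψ̃_2(t,L). Define ũ_i(t,x) = ψ̃_i(t,x) + ∫_0^x m_i(x,ξ) χ̃(t,ξ) dξ for i = 1,2,3 and w̃(t,x)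 = χ̃(t,x) + ∫_0^x m_4(x,ξ) χ̃(t,ξ) dξ. Then (ũ_1, ũ_2, ũ_3, w̃) is a C¹ solution of the error system ∂_t ũ_i + γ_i ∂_x ũ_i = Σ_{j=1}^3 σ_{ij} ũ_j + α_i(x) w̃ + p_i(x) w̃(t,0), ∂_t w̃ − μ ∂_x w̃ = Σ_{j=1}^3 θ_j(x) ũ_j + p_4(x) w̃(t,0), ũ_i(t,0) = 0, w̃(t,L) = ρ_1 ũ_1(t,L) + ρ_2 ũ_2(t,L), where p_i(x) = −μ m_i(x,0) for i = 1,2,3,4. -/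

import Mathlib

/-! The transformation is a Volterra operator acting on `χ`, so each of the four error equations
comes from one identity for `I(t,x) = ∫₀ˣ M(x,ξ) χ(t,ξ) dξ`. Differentiate under the integral sign
(Leibniz rule), replace `∂ₜχ` by `μ ∂_ξχ` plus the source terms of the target system, and integrate
`μ M ∂_ξχ` by parts. This produces the diagonal term `(c + μ) M(x,x) χ(t,x)`, the output injection
`-μ M(x,0) χ(t,0)`, and the differential operator `c ∂ₓM - μ ∂_ξM` under the integral, for any
transport speed `c`. Exchanging the order of integration on the triangle (Dirichlet's formula) and
using the Volterra relation turns the source terms into `-∑ⱼ ∫₀ˣ Gⱼ ψⱼ`, where `Gⱼ` is the kernel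
attached to `M`; see `transport_volterra_integral`.

Taking `c = γᵢ`, `M = mᵢ`, `Gⱼ = gᵢⱼ`, respectively `c = -μ`, `M = m₄`, `Gⱼ = hⱼ`, the kernel
equations finish the computation: `(γᵢ + μ) mᵢ(x,x) = αᵢ(x)`, while for `w̃` the diagonal term
vanishes. The `C¹` regularity follows from `contDiff_parametric_primitive`. -/

/-! ### Differentiation of parametric integrals -/

open MeasureTheory Filter Topology in
theorem hasFDerivAt_param_integral {E : Type*} [NormedAddCommGroup E] [NormedSpace ℝ E]
    [ProperSpace E] {k : E → ℝ → ℝ} (hk : ContDiff ℝ 1 (Function.uncurry k)) (p : E) (y : ℝ) :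
    HasFDerivAt (fun q => ∫ s in (0:ℝ)..y, k q s)
      (∫ s in (0:ℝ)..y, (fderiv ℝ (Function.uncurry k) (p, s)).comp
        (ContinuousLinearMap.inl ℝ E ℝ)) p := by
  have hc : Continuous (Function.uncurry fun (q : E) (s : ℝ) =>
      (fderiv ℝ (Function.uncurry k) (q, s)).comp (ContinuousLinearMap.inl ℝ E ℝ)) := by
    have := hk.continuous_fderiv (by norm_num)
    exact (this.comp (continuous_fst.prodMk continuous_snd)).clm_comp continuous_const
  have hkc : ∀ q, Continuous (k q) := fun q =>
    hk.continuous.comp (by fun_prop : Continuous fun s => (q, s))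
  have hcc : ∀ q, Continuous fun s => (fderiv ℝ (Function.uncurry k) (q, s)).comp
      (ContinuousLinearMap.inl ℝ E ℝ) :=
    fun q => hc.comp (by fun_prop : Continuous fun s => (q, s))
  -- The integrable majorant is the maximum of the partial derivative on a compact box.
  obtain ⟨C, hC⟩ := ((isCompact_closedBall p 1).prod
    (isCompact_uIcc (a := (0:ℝ)) (b := y))).exists_bound_of_continuousOn hc.continuousOn
  refine intervalIntegral.hasFDerivAt_integral_of_dominated_of_fderiv_le
    (F := fun q s => k q s) (bound := fun _ => C)
    (F' := fun q s => (fderiv ℝ (Function.uncurry k) (q, s)).comp (ContinuousLinearMap.inl ℝ E ℝ))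
    (s := Metric.closedBall p 1) (Metric.closedBall_mem_nhds p one_pos) ?_ ?_ ?_ ?_ ?_ ?_
  · exact Eventually.of_forall fun q => (hkc q).aestronglyMeasurable
  · exact (hkc p).intervalIntegrable _ _
  · exact (hcc p).aestronglyMeasurable
  · exact Eventually.of_forall fun s hs q hq =>
      hC (q, s) ⟨hq, Set.uIoc_subset_uIcc hs⟩
  · exact intervalIntegrable_const
  · refine Eventually.of_forall fun s _ q _ => ?_
    have h1 := ((hk.differentiable (by norm_num)) (q, s)).hasFDerivAt
    exact h1.comp (f := fun e : E => (e, s)) q (hasFDerivAt_prodMk_left q s)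

open MeasureTheory Filter Topology in
/-- The Fréchet form of the Leibniz rule, with the upper endpoint as an additional variable,
together with the continuity of the derivative. -/
theorem hasStrictFDerivAt_parametric_primitive {E : Type*} [NormedAddCommGroup E]
    [NormedSpace ℝ E] [ProperSpace E] {k : E → ℝ → ℝ}
    (hk : ContDiff ℝ 1 (Function.uncurry k)) (u : E × ℝ) :
    HasStrictFDerivAt (Function.uncurry fun (p : E) (y : ℝ) => ∫ s in (0:ℝ)..y, k p s)
      ((∫ s in (0:ℝ)..u.2, (fderiv ℝ (Function.uncurry k) (u.1, s)).comp
        (ContinuousLinearMap.inl ℝ E ℝ)).coprod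
        (ContinuousLinearMap.toSpanSingleton ℝ (k u.1 u.2))) u ∧
    Continuous fun u : E × ℝ => ((∫ s in (0:ℝ)..u.2, (fderiv ℝ (Function.uncurry k) (u.1, s)).comp
        (ContinuousLinearMap.inl ℝ E ℝ)).coprod
        (ContinuousLinearMap.toSpanSingleton ℝ (k u.1 u.2))) := by
  have hc : Continuous (Function.uncurry fun (q : E) (s : ℝ) =>
      (fderiv ℝ (Function.uncurry k) (q, s)).comp (ContinuousLinearMap.inl ℝ E ℝ)) := by
    have := hk.continuous_fderiv (by norm_num)
    exact (this.comp (continuous_fst.prodMk continuous_snd)).clm_comp continuous_const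
  have hkc : ∀ q, Continuous (k q) := fun q =>
    hk.continuous.comp (by fun_prop : Continuous fun s => (q, s))
  have c1 := intervalIntegral.continuous_parametric_primitive_of_continuous
    (μ := volume) (a₀ := (0:ℝ)) hc
  have c2 : Continuous fun u : E × ℝ => ContinuousLinearMap.toSpanSingleton ℝ (k u.1 u.2) := by
    have h2 : Continuous fun u : E × ℝ =>
        (ContinuousLinearMap.toSpanSingletonCLE (𝕜 := ℝ) (E := ℝ)) (k u.1 u.2) :=
      (ContinuousLinearMap.toSpanSingletonCLE (𝕜 := ℝ) (E := ℝ)).continuous.comp hk.continuous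
    exact h2
  refine ⟨?_, ?_⟩
  · refine hasStrictFDerivAt_uncurry_coprod (𝕜 := ℝ)
      (f := fun (p : E) (y : ℝ) => ∫ s in (0:ℝ)..y, k p s)
      (f₁ := fun p y => ∫ s in (0:ℝ)..y, (fderiv ℝ (Function.uncurry k) (p, s)).comp
        (ContinuousLinearMap.inl ℝ E ℝ))
      (f₂ := fun p y => ContinuousLinearMap.toSpanSingleton ℝ (k p y)) ?_ ?_
      c1.continuousAt c2.continuousAt
    · exact Eventually.of_forall fun v => hasFDerivAt_param_integral hk v.1 v.2
    · refine Eventually.of_forall fun v => ?_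
      exact (intervalIntegral.integral_hasDerivAt_right ((hkc v.1).intervalIntegrable _ _)
        ((hkc v.1).stronglyMeasurableAtFilter _ _) (hkc v.1).continuousAt).hasFDerivAt
  · exact (ContinuousLinearMap.coprodEquivL (𝕜 := ℝ) (E := E) (F := ℝ) (G := ℝ) ℝ).continuous.comp
      (c1.prodMk c2)

theorem contDiff_parametric_primitive {E : Type*} [NormedAddCommGroup E] [NormedSpace ℝ E]
    [ProperSpace E] {k : E → ℝ → ℝ} (hk : ContDiff ℝ 1 (Function.uncurry k)) :
    ContDiff ℝ 1 (Function.uncurry fun (p : E) (y : ℝ) => ∫ s in (0:ℝ)..y, k p s) :=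
  contDiff_one_iff_hasFDerivAt.2 ⟨_, (hasStrictFDerivAt_parametric_primitive hk 0).2,
    fun u => (hasStrictFDerivAt_parametric_primitive hk u).1.hasFDerivAt⟩

theorem hasDerivAt_fst_of_contDiff {k : ℝ → ℝ → ℝ} (hk : ContDiff ℝ 1 (Function.uncurry k))
    (x s : ℝ) : HasDerivAt (fun y => k y s) (deriv (fun y => k y s) x) x := by
  have h1 := ((hk.comp (by fun_prop : ContDiff ℝ 1 fun y : ℝ => (y, s))).differentiable
    (by norm_num)) x
  exact h1.hasDerivAt

theorem hasDerivAt_snd_of_contDiff {k : ℝ → ℝ → ℝ} (hk : ContDiff ℝ 1 (Function.uncurry k))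
    (x s : ℝ) : HasDerivAt (k x) (deriv (k x) s) s := by
  have h1 := ((hk.comp (by fun_prop : ContDiff ℝ 1 fun y : ℝ => (x, y))).differentiable
    (by norm_num)) s
  exact h1.hasDerivAt

theorem continuous_deriv_snd_of_contDiff {k : ℝ → ℝ → ℝ}
    (hk : ContDiff ℝ 1 (Function.uncurry k)) (x : ℝ) : Continuous (deriv (k x)) :=
  (hk.comp (by fun_prop : ContDiff ℝ 1 fun y : ℝ => (x, y))).continuous_deriv (by norm_num)

theorem deriv_fst_eq_fderiv {k : ℝ → ℝ → ℝ} (hk : ContDiff ℝ 1 (Function.uncurry k)) (x s : ℝ) :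
    deriv (fun y => k y s) x = fderiv ℝ (Function.uncurry k) (x, s) (1, 0) := by
  have h1 := ((hk.differentiable (by norm_num)) (x, s)).hasFDerivAt
  have h2 : HasDerivAt (fun y => k y s) _ x :=
    (h1.comp (f := fun y : ℝ => (y, s)) x (hasFDerivAt_prodMk_left x s)).hasDerivAt
  simpa using h2.deriv

theorem continuous_deriv_fst_of_contDiff {k : ℝ → ℝ → ℝ}
    (hk : ContDiff ℝ 1 (Function.uncurry k)) (x : ℝ) :
    Continuous fun s => deriv (fun y => k y s) x := by
  simp_rw [deriv_fst_eq_fderiv hk]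
  have := hk.continuous_fderiv (by norm_num)
  exact (this.comp (by fun_prop : Continuous fun s : ℝ => (x, s))).clm_apply continuous_const

theorem integral_fderiv_inl_apply_one {k : ℝ → ℝ → ℝ} (hk : ContDiff ℝ 1 (Function.uncurry k))
    (x y : ℝ) :
    (∫ s in (0:ℝ)..y, (fderiv ℝ (Function.uncurry k) (x, s)).comp
      (ContinuousLinearMap.inl ℝ ℝ ℝ)) 1 = ∫ s in (0:ℝ)..y, deriv (fun y => k y s) x := by
  have hc : Continuous fun s => (fderiv ℝ (Function.uncurry k) (x, s)).comp
      (ContinuousLinearMap.inl ℝ ℝ ℝ) := by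
    have := hk.continuous_fderiv (by norm_num)
    exact (this.comp (by fun_prop : Continuous fun s : ℝ => (x, s))).clm_comp continuous_const
  rw [ContinuousLinearMap.intervalIntegral_apply (hc.intervalIntegrable _ _)]
  simp [deriv_fst_eq_fderiv hk]

theorem hasDerivAt_integral_param {k : ℝ → ℝ → ℝ} (hk : ContDiff ℝ 1 (Function.uncurry k))
    (t x : ℝ) : HasDerivAt (fun τ => ∫ s in (0:ℝ)..x, k τ s)
      (∫ s in (0:ℝ)..x, deriv (fun τ => k τ s) t) t := by
  have h1 := (hasFDerivAt_param_integral hk t x).hasDerivAt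
  rwa [integral_fderiv_inl_apply_one hk] at h1

/-- Leibniz rule: the parameter is also the upper endpoint of the integral. -/
theorem hasDerivAt_integral_param_upper {k : ℝ → ℝ → ℝ}
    (hk : ContDiff ℝ 1 (Function.uncurry k)) (x : ℝ) :
    HasDerivAt (fun y => ∫ s in (0:ℝ)..y, k y s)
      (k x x + ∫ s in (0:ℝ)..x, deriv (fun y => k y s) x) x := by
  have h1 := (hasStrictFDerivAt_parametric_primitive hk (x, x)).1.hasFDerivAt
  have h2 := h1.comp_hasDerivAt (f := fun y : ℝ => (y, y)) x
    ((hasDerivAt_id x).prodMk (hasDerivAt_id x))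
  refine h2.congr_deriv ?_
  rw [ContinuousLinearMap.coprod_apply, integral_fderiv_inl_apply_one hk]
  simp [add_comm]

/-! ### Exchange of integrals on the triangle -/

open MeasureTheory in
/-- Dirichlet's formula: Fubini on the triangle `0 ≤ s ≤ ξ ≤ x`. The inner integral on the left is
also shown to be integrable. -/
theorem integral_triangle_swap {f : ℝ → ℝ → ℝ} {x : ℝ} (hx : 0 ≤ x)
    (hf : ContinuousOn (Function.uncurry f) {p : ℝ × ℝ | 0 ≤ p.2 ∧ p.2 ≤ p.1 ∧ p.1 ≤ x}) :
    IntervalIntegrable (fun ξ => ∫ s in (0:ℝ)..ξ, f ξ s) volume 0 x ∧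
    ∫ ξ in (0:ℝ)..x, ∫ s in (0:ℝ)..ξ, f ξ s = ∫ s in (0:ℝ)..x, ∫ ξ in s..x, f ξ s := by
  set T : Set (ℝ × ℝ) := {p : ℝ × ℝ | 0 ≤ p.2 ∧ p.2 ≤ p.1 ∧ p.1 ≤ x} with hT
  have hTc : IsClosed T :=
    (isClosed_le continuous_const continuous_snd).inter
      ((isClosed_le continuous_snd continuous_fst).inter
        (isClosed_le continuous_fst continuous_const))
  have hTk : IsCompact T := by
    refine (isCompact_Icc (a := (0:ℝ)) (b := x)).prod (isCompact_Icc (a := (0:ℝ)) (b := x))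
      |>.of_isClosed_subset hTc ?_
    rintro ⟨a, b⟩ ⟨h1, h2, h3⟩
    simp only at h1 h2 h3
    exact ⟨⟨by linarith, h3⟩, ⟨h1, by linarith⟩⟩
  have htri : Integrable (T.indicator (Function.uncurry f)) (volume.prod volume) :=
    (integrable_indicator_iff hTc.measurableSet).2 (hf.integrableOn_compact hTk)
  -- The integrand extended by zero turns both iterated integrals into integrals over a square.
  set F : ℝ → ℝ → ℝ := fun ξ s => T.indicator (Function.uncurry f) (ξ, s) with hF
  have hl : ∀ ξ ∈ Set.Ioc 0 x, ∫ s in (0:ℝ)..x, F ξ s = ∫ s in (0:ℝ)..ξ, f ξ s := by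
    intro ξ hξ
    rw [intervalIntegral.integral_of_le hx, intervalIntegral.integral_of_le hξ.1.le]
    have : Set.EqOn (F ξ) ((Set.Iic ξ).indicator (f ξ)) (Set.Ioc 0 x) := by
      intro s hs
      by_cases h : s ≤ ξ
      · simp [hF, hT, h, hs.1.le, hξ.2]
      · simp [hF, hT, h]
    rw [setIntegral_congr_fun measurableSet_Ioc this, setIntegral_indicator measurableSet_Iic]
    congr 2
    ext s
    simp only [Set.mem_inter_iff, Set.mem_Ioc, Set.mem_Iic]
    constructor
    · rintro ⟨⟨a, b⟩, c⟩; exact ⟨a, c⟩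
    · rintro ⟨a, c⟩; exact ⟨⟨a, c.trans hξ.2⟩, c⟩
  have hr : ∀ s ∈ Set.Ioc 0 x, ∫ ξ in (0:ℝ)..x, F ξ s = ∫ ξ in s..x, f ξ s := by
    intro s hs
    rw [intervalIntegral.integral_of_le hx, intervalIntegral.integral_of_le hs.2,
      ← integral_Icc_eq_integral_Ioc (x := s)]
    have : Set.EqOn (fun ξ => F ξ s) ((Set.Ici s).indicator (fun ξ => f ξ s)) (Set.Ioc 0 x) := by
      intro ξ hξ
      by_cases h : s ≤ ξ
      · simp [hF, hT, h, hs.1.le, hξ.2]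
      · simp [hF, hT, h]
    rw [setIntegral_congr_fun measurableSet_Ioc this, setIntegral_indicator measurableSet_Ici]
    congr 2
    ext ξ
    simp only [Set.mem_inter_iff, Set.mem_Ioc, Set.mem_Ici, Set.mem_Icc]
    constructor
    · rintro ⟨⟨a, b⟩, c⟩; exact ⟨c, b⟩
    · rintro ⟨a, c⟩; exact ⟨⟨hs.1.trans_le a, c⟩, a⟩
  have hsquare : Integrable (Function.uncurry F)
      ((volume.restrict (Set.Ioc 0 x)).prod (volume.restrict (Set.Ioc 0 x))) := by
    rw [Measure.prod_restrict]
    exact htri.restrict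
  refine ⟨?_, ?_⟩
  · rw [intervalIntegrable_iff_integrableOn_Ioc_of_le hx]
    have h1 := hsquare.integral_prod_left
    refine IntegrableOn.congr_fun (f := fun ξ => ∫ s in Set.Ioc 0 x, F ξ s) h1 ?_
      measurableSet_Ioc
    intro ξ hξ
    have := hl ξ hξ
    rwa [intervalIntegral.integral_of_le hx] at this
  · have h1 := intervalIntegral_intervalIntegral_swap (F := F) (a := 0) (b := x) (c := 0) (d := x)
      (by rw [Set.uIoc_of_le hx, IntegrableOn, Measure.volume_eq_prod,
        ← Measure.prod_restrict]; exact hsquare)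
    rw [intervalIntegral.integral_congr_ae (g := fun ξ => ∫ s in (0:ℝ)..x, F ξ s),
      h1, intervalIntegral.integral_congr_ae]
    · exact Filter.Eventually.of_forall fun s hs => hr s (by rwa [Set.uIoc_of_le hx] at hs)
    · exact Filter.Eventually.of_forall fun s hs => (hl s (by rwa [Set.uIoc_of_le hx] at hs)).symm

open MeasureTheory in
/-- If `G` is the Volterra kernel attached to `M`, i.e.
`G(x,ξ) = -θ(ξ) M(x,ξ) - ∫_ξ^x M(x,s) h(s,ξ) ds`, then testing the source term
`θ ψ + ∫₀^ξ h ψ` against `M(x,·)` gives `-∫₀ˣ G ψ`. -/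
theorem integral_volterra_kernel {L x : ℝ} (hx : 0 ≤ x) (hxL : x ≤ L) {M G θ ψ : ℝ → ℝ}
    {h : ℝ → ℝ → ℝ} (hM : Continuous M) (hψ : Continuous ψ) (hθ : ContinuousOn θ (Set.Icc 0 L))
    (hG : ContinuousOn G (Set.Icc 0 x))
    (hh : ContinuousOn (Function.uncurry h) {p : ℝ × ℝ | 0 ≤ p.2 ∧ p.2 ≤ p.1 ∧ p.1 ≤ L})
    (hGM : ∀ ξ, 0 ≤ ξ → ξ ≤ x → G ξ = - θ ξ * M ξ - ∫ s in ξ..x, M s * h s ξ) :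
    IntervalIntegrable (fun ξ => M ξ * (θ ξ * ψ ξ + ∫ s in (0:ℝ)..ξ, h ξ s * ψ s)) volume 0 x ∧
    ∫ ξ in (0:ℝ)..x, M ξ * (θ ξ * ψ ξ + ∫ s in (0:ℝ)..ξ, h ξ s * ψ s)
      = - ∫ ξ in (0:ℝ)..x, G ξ * ψ ξ := by
  have hsub : Set.uIcc 0 x ⊆ Set.Icc 0 L := by
    rw [Set.uIcc_of_le hx]; exact Set.Icc_subset_Icc_right hxL
  have hf : ContinuousOn (Function.uncurry fun ξ s => M ξ * (h ξ s * ψ s))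
      {p : ℝ × ℝ | 0 ≤ p.2 ∧ p.2 ≤ p.1 ∧ p.1 ≤ x} := by
    have h1 : ContinuousOn (Function.uncurry h)
        {p : ℝ × ℝ | 0 ≤ p.2 ∧ p.2 ≤ p.1 ∧ p.1 ≤ x} :=
      hh.mono fun p hp => ⟨hp.1, hp.2.1, hp.2.2.trans hxL⟩
    exact (hM.comp continuous_fst).continuousOn.mul
      (h1.mul (hψ.comp continuous_snd).continuousOn)
  obtain ⟨i1, e1⟩ := integral_triangle_swap hx hf
  have i2 : IntervalIntegrable (fun ξ => M ξ * (θ ξ * ψ ξ)) volume 0 x :=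
    (hM.continuousOn.mul ((hθ.mono hsub).mul hψ.continuousOn)).intervalIntegrable
  have i3 : IntervalIntegrable (fun ξ => G ξ * ψ ξ) volume 0 x :=
    ContinuousOn.intervalIntegrable (by
      rw [Set.uIcc_of_le hx]; exact hG.mul hψ.continuousOn)
  simp_rw [intervalIntegral.integral_const_mul] at i1 e1
  simp_rw [mul_add]
  refine ⟨i2.add i1, ?_⟩
  rw [intervalIntegral.integral_add i2 i1, e1]
  have e2 : ∫ s in (0:ℝ)..x, ∫ ξ in s..x, M ξ * (h ξ s * ψ s)
      = ∫ s in (0:ℝ)..x, (-(G s * ψ s) - M s * (θ s * ψ s)) := by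
    refine intervalIntegral.integral_congr fun s hs => ?_
    rw [Set.uIcc_of_le hx] at hs
    simp_rw [← mul_assoc]
    rw [intervalIntegral.integral_mul_const, hGM s hs.1 hs.2]
    ring
  have i4 : IntervalIntegrable (fun ξ => -(G ξ * ψ ξ)) volume 0 x := i3.neg
  rw [e2, intervalIntegral.integral_sub i4 i2, intervalIntegral.integral_neg]
  ring

/-! ### Transport of the Volterra integral and the error system -/

open MeasureTheory in
/-- The transport operator `∂ₜ + c ∂ₓ` applied to `∫₀ˣ M(x,ξ) χ(t,ξ) dξ`, for `χ` governed by the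
target system and `G j` the Volterra kernels attached to `M`. -/
theorem transport_volterra_integral {L : ℝ} {μ c : ℝ} {θ : Fin 3 → ℝ → ℝ}
    (hθ : ∀ i, ContinuousOn (θ i) (Set.Icc 0 L)) {M : ℝ → ℝ → ℝ}
    (hM : ContDiff ℝ 1 (Function.uncurry M)) {h G : Fin 3 → ℝ → ℝ → ℝ}
    (hh : ∀ j, ContinuousOn (Function.uncurry (h j))
      {p : ℝ × ℝ | 0 ≤ p.2 ∧ p.2 ≤ p.1 ∧ p.1 ≤ L})
    (hG : ∀ j, ContinuousOn (Function.uncurry (G j))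
      {p : ℝ × ℝ | 0 ≤ p.2 ∧ p.2 ≤ p.1 ∧ p.1 ≤ L})
    (hGM : ∀ j, ∀ x ξ : ℝ, 0 ≤ ξ → ξ ≤ x → x ≤ L →
      G j x ξ = - θ j ξ * M x ξ - ∫ s in ξ..x, M x s * h j s ξ)
    {ψ : Fin 3 → ℝ → ℝ → ℝ} {χ : ℝ → ℝ → ℝ}
    (hψ : ∀ i, ContDiff ℝ 1 (Function.uncurry (ψ i))) (hχ : ContDiff ℝ 1 (Function.uncurry χ))
    {t x : ℝ} (hx : 0 ≤ x) (hxL : x ≤ L)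
    (hχpde : ∀ x : ℝ, 0 ≤ x → x ≤ L →
      deriv (fun τ => χ τ x) t - μ * deriv (fun y => χ t y) x
        = (∑ j, θ j x * ψ j t x)
          + ∑ j, ∫ ξ in (0:ℝ)..x, h j x ξ * ψ j t ξ) :
    deriv (fun τ => ∫ ξ in (0:ℝ)..x, M x ξ * χ τ ξ) t
      + c * deriv (fun y => ∫ ξ in (0:ℝ)..y, M y ξ * χ t ξ) x
      = (c + μ) * M x x * χ t x - μ * M x 0 * χ t 0
        + (∫ ξ in (0:ℝ)..x, (c * deriv (fun y => M y ξ) x - μ * deriv (fun s => M x s) ξ) * χ t ξ)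
        - ∑ j, ∫ ξ in (0:ℝ)..x, G j x ξ * ψ j t ξ := by
  have cM : Continuous (M x) := hM.continuous.comp (by fun_prop : Continuous fun s => (x, s))
  have cχ : Continuous (χ t) := hχ.continuous.comp (by fun_prop : Continuous fun s => (t, s))
  have cψ : ∀ j, Continuous (ψ j t) :=
    fun j => (hψ j).continuous.comp (by fun_prop : Continuous fun s => (t, s))
  have cM1 := continuous_deriv_fst_of_contDiff hM x
  have cM2 := continuous_deriv_snd_of_contDiff hM x
  have cχ2 := continuous_deriv_snd_of_contDiff hχ t
  have dt : deriv (fun τ => ∫ ξ in (0:ℝ)..x, M x ξ * χ τ ξ) t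
      = ∫ ξ in (0:ℝ)..x, M x ξ * deriv (fun τ => χ τ ξ) t := by
    have hk : ContDiff ℝ 1 (Function.uncurry fun τ ξ => M x ξ * χ τ ξ) :=
      (hM.comp (by fun_prop : ContDiff ℝ 1 fun p : ℝ × ℝ => (x, p.2))).mul hχ
    rw [(hasDerivAt_integral_param hk t x).deriv]
    refine intervalIntegral.integral_congr fun ξ _ => ?_
    exact ((hasDerivAt_fst_of_contDiff hχ t ξ).const_mul _).deriv
  have dx : deriv (fun y => ∫ ξ in (0:ℝ)..y, M y ξ * χ t ξ) x
      = M x x * χ t x + ∫ ξ in (0:ℝ)..x, deriv (fun y => M y ξ) x * χ t ξ := by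
    have hk : ContDiff ℝ 1 (Function.uncurry fun y ξ => M y ξ * χ t ξ) :=
      hM.mul (hχ.comp (by fun_prop : ContDiff ℝ 1 fun p : ℝ × ℝ => (t, p.2)))
    rw [(hasDerivAt_integral_param_upper hk x).deriv]
    congr 1
    refine intervalIntegral.integral_congr fun ξ _ => ?_
    exact ((hasDerivAt_fst_of_contDiff hM x ξ).mul_const _).deriv
  have key := fun j => integral_volterra_kernel (M := M x) (G := G j x) (θ := θ j) (ψ := ψ j t)
    (h := h j) hx hxL cM (cψ j) (hθ j)
    ((hG j).comp (f := fun ξ : ℝ => (x, ξ)) (s := Set.Icc 0 x) (by fun_prop)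
      (fun ξ hξ => ⟨hξ.1, hξ.2, hxL⟩))
    (hh j) (fun ξ h1 h2 => hGM j x ξ h1 h2 hxL)
  have split : ∫ ξ in (0:ℝ)..x, M x ξ * deriv (fun τ => χ τ ξ) t
      = μ * (∫ ξ in (0:ℝ)..x, M x ξ * deriv (χ t) ξ)
        - ∑ j, ∫ ξ in (0:ℝ)..x, G j x ξ * ψ j t ξ := by
    have e : ∫ ξ in (0:ℝ)..x, M x ξ * deriv (fun τ => χ τ ξ) t
        = ∫ ξ in (0:ℝ)..x, (μ * (M x ξ * deriv (χ t) ξ)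
          + ∑ j, M x ξ * (θ j ξ * ψ j t ξ + ∫ s in (0:ℝ)..ξ, h j ξ s * ψ j t s)) := by
      refine intervalIntegral.integral_congr fun ξ hξ => ?_
      rw [Set.uIcc_of_le hx] at hξ
      have := hχpde ξ hξ.1 (hξ.2.trans hxL)
      rw [← Finset.mul_sum, Finset.sum_add_distrib, ← this]
      ring
    rw [e, intervalIntegral.integral_add, intervalIntegral.integral_const_mul,
      intervalIntegral.integral_finsetSum fun j _ => (key j).1]
    · simp_rw [fun j => (key j).2]
      rw [Finset.sum_neg_distrib]; ring
    · exact (continuous_const.mul (cM.mul cχ2)).intervalIntegrable _ _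
    · have := IntervalIntegrable.sum (Finset.univ : Finset (Fin 3)) fun j _ => (key j).1
      simpa only [Finset.sum_fn] using this
  have parts := intervalIntegral.integral_mul_deriv_eq_deriv_mul (a := 0) (b := x)
    (fun s _ => hasDerivAt_snd_of_contDiff hM x s) (fun s _ => hasDerivAt_snd_of_contDiff hχ t s)
    (cM2.intervalIntegrable _ _) (cχ2.intervalIntegrable _ _)
  have comb : ∫ ξ in (0:ℝ)..x,
        (c * deriv (fun y => M y ξ) x - μ * deriv (fun s => M x s) ξ) * χ t ξ
      = c * (∫ ξ in (0:ℝ)..x, deriv (fun y => M y ξ) x * χ t ξ)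
        - μ * ∫ ξ in (0:ℝ)..x, deriv (M x) ξ * χ t ξ := by
    rw [← intervalIntegral.integral_const_mul, ← intervalIntegral.integral_const_mul,
      ← intervalIntegral.integral_sub]
    · refine intervalIntegral.integral_congr fun ξ _ => ?_
      ring
    · exact (continuous_const.mul (cM1.mul cχ)).intervalIntegrable _ _
    · exact (continuous_const.mul (cM2.mul cχ)).intervalIntegrable _ _
  rw [dt, dx, split, parts, comb]
  ring

theorem contDiff_volterra_integral {M χ : ℝ → ℝ → ℝ} (hM : ContDiff ℝ 1 (Function.uncurry M))
    (hχ : ContDiff ℝ 1 (Function.uncurry χ)) :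
    ContDiff ℝ 1 (Function.uncurry fun t x => ∫ ξ in (0:ℝ)..x, M x ξ * χ t ξ) := by
  have hk : ContDiff ℝ 1 (Function.uncurry fun (p : ℝ × ℝ) (ξ : ℝ) => M p.2 ξ * χ p.1 ξ) :=
    (hM.comp (by fun_prop : ContDiff ℝ 1 fun q : (ℝ × ℝ) × ℝ => (q.1.2, q.2))).mul
      (hχ.comp (by fun_prop : ContDiff ℝ 1 fun q : (ℝ × ℝ) × ℝ => (q.1.1, q.2)))
  exact (contDiff_parametric_primitive hk).comp
    (by fun_prop : ContDiff ℝ 1 fun p : ℝ × ℝ => (p, p.2))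

theorem observer_backstepping_maps_target_to_error
    (L : ℝ) (hL : 0 < L)
    (γ : Fin 3 → ℝ) (hγ : ∀ i, 0 < γ i)
    (μ : ℝ) (hμ : 0 < μ)
    (σ : Fin 3 → Fin 3 → ℝ) (ρ₁ ρ₂ : ℝ)
    (α θ : Fin 3 → ℝ → ℝ)
    (hα : ∀ i, ContinuousOn (α i) (Set.Icc 0 L))
    (hθ : ∀ i, ContinuousOn (θ i) (Set.Icc 0 L))
    -- observer kernels m₁,m₂,m₃,m₄ on the triangle T = {0 ≤ ξ ≤ x ≤ L}
    (m : Fin 3 → ℝ → ℝ → ℝ) (m₄ : ℝ → ℝ → ℝ)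
    (hmC1 : ∀ i, ContDiff ℝ 1 (Function.uncurry (m i)))
    (hm₄C1 : ContDiff ℝ 1 (Function.uncurry m₄))
    (hmpde : ∀ i, ∀ x ξ : ℝ, 0 ≤ ξ → ξ ≤ x → x ≤ L →
      γ i * deriv (fun y => m i y ξ) x - μ * deriv (fun s => m i x s) ξ
        = (∑ j, σ i j * m j x ξ) + α i x * m₄ x ξ)
    (hm₄pde : ∀ x ξ : ℝ, 0 ≤ ξ → ξ ≤ x → x ≤ L →
      μ * deriv (fun y => m₄ y ξ) x + μ * deriv (fun s => m₄ x s) ξ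
        = - ∑ j, θ j x * m j x ξ)
    (hmdiag : ∀ i, ∀ x : ℝ, 0 ≤ x → x ≤ L → m i x x = α i x / (γ i + μ))
    (hm₄bc : ∀ ξ : ℝ, 0 ≤ ξ → ξ ≤ L → m₄ L ξ = ρ₁ * m 0 L ξ + ρ₂ * m 1 L ξ)
    -- the Volterra kernels h_j and g_{ij}
    (h : Fin 3 → ℝ → ℝ → ℝ) (g : Fin 3 → Fin 3 → ℝ → ℝ → ℝ)
    (hhC : ∀ j, ContinuousOn (Function.uncurry (h j))
      {p : ℝ × ℝ | 0 ≤ p.2 ∧ p.2 ≤ p.1 ∧ p.1 ≤ L})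
    (hgC : ∀ i j, ContinuousOn (Function.uncurry (g i j))
      {p : ℝ × ℝ | 0 ≤ p.2 ∧ p.2 ≤ p.1 ∧ p.1 ≤ L})
    (hh : ∀ j, ∀ x ξ : ℝ, 0 ≤ ξ → ξ ≤ x → x ≤ L →
      h j x ξ = - θ j ξ * m₄ x ξ - ∫ s in ξ..x, m₄ x s * h j s ξ)
    (hg : ∀ i j, ∀ x ξ : ℝ, 0 ≤ ξ → ξ ≤ x → x ≤ L →
      g i j x ξ = - θ j ξ * m i x ξ - ∫ s in ξ..x, m i x s * h j s ξ)
    -- a C¹ solution of the observer target system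
    (ψ : Fin 3 → ℝ → ℝ → ℝ) (χ : ℝ → ℝ → ℝ)
    (hψC1 : ∀ i, ContDiff ℝ 1 (Function.uncurry (ψ i)))
    (hχC1 : ContDiff ℝ 1 (Function.uncurry χ))
    (hψpde : ∀ i, ∀ t x : ℝ, 0 ≤ t → 0 ≤ x → x ≤ L →
      deriv (fun τ => ψ i τ x) t + γ i * deriv (fun y => ψ i t y) x
        = (∑ j, σ i j * ψ j t x)
          + ∑ j, ∫ ξ in (0:ℝ)..x, g i j x ξ * ψ j t ξ)
    (hχpde : ∀ t x : ℝ, 0 ≤ t → 0 ≤ x → x ≤ L →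
      deriv (fun τ => χ τ x) t - μ * deriv (fun y => χ t y) x
        = (∑ j, θ j x * ψ j t x)
          + ∑ j, ∫ ξ in (0:ℝ)..x, h j x ξ * ψ j t ξ)
    (hψbc : ∀ i, ∀ t : ℝ, 0 ≤ t → ψ i t 0 = 0)
    (hχbc : ∀ t : ℝ, 0 ≤ t → χ t L = ρ₁ * ψ 0 t L + ρ₂ * ψ 1 t L)
    -- the transformed variables
    (tu : Fin 3 → ℝ → ℝ → ℝ) (tw : ℝ → ℝ → ℝ)
    (htu : ∀ i, ∀ t x : ℝ,
      tu i t x = ψ i t x + ∫ ξ in (0:ℝ)..x, m i x ξ * χ t ξ)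
    (htw : ∀ t x : ℝ,
      tw t x = χ t x + ∫ ξ in (0:ℝ)..x, m₄ x ξ * χ t ξ) :
    -- then (tu₁,tu₂,tu₃,tw) is a C¹ solution of the error system
    (∀ i, ContDiff ℝ 1 (Function.uncurry (tu i)))
    ∧ ContDiff ℝ 1 (Function.uncurry tw)
    ∧ (∀ i, ∀ t x : ℝ, 0 ≤ t → 0 ≤ x → x ≤ L →
        deriv (fun τ => tu i τ x) t + γ i * deriv (fun y => tu i t y) x
          = (∑ j, σ i j * tu j t x) + α i x * tw t x
            + (-μ * m i x 0) * tw t 0)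
    ∧ (∀ t x : ℝ, 0 ≤ t → 0 ≤ x → x ≤ L →
        deriv (fun τ => tw τ x) t - μ * deriv (fun y => tw t y) x
          = (∑ j, θ j x * tu j t x) + (-μ * m₄ x 0) * tw t 0)
    ∧ (∀ i, ∀ t : ℝ, 0 ≤ t → tu i t 0 = 0)
    ∧ (∀ t : ℝ, 0 ≤ t → tw t L = ρ₁ * tu 0 t L + ρ₂ * tu 1 t L) := by
  obtain rfl : tu = fun i t x => ψ i t x + ∫ ξ in (0:ℝ)..x, m i x ξ * χ t ξ := by
    funext i t x; exact htu i t x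
  obtain rfl : tw = fun t x => χ t x + ∫ ξ in (0:ℝ)..x, m₄ x ξ * χ t ξ := by
    funext t x; exact htw t x
  have cI := fun i => contDiff_volterra_integral (hmC1 i) hχC1
  have cI₄ := contDiff_volterra_integral hm₄C1 hχC1
  have im : ∀ (i : Fin 3) (t x : ℝ),
      IntervalIntegrable (fun ξ => m i x ξ * χ t ξ) MeasureTheory.volume 0 x := fun i t x =>
    (((hmC1 i).continuous.comp (by fun_prop : Continuous fun s => (x, s))).mul
      (hχC1.continuous.comp (by fun_prop : Continuous fun s => (t, s)))).intervalIntegrable _ _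
  have im₄ : ∀ (t x : ℝ),
      IntervalIntegrable (fun ξ => m₄ x ξ * χ t ξ) MeasureTheory.volume 0 x := fun t x =>
    ((hm₄C1.continuous.comp (by fun_prop : Continuous fun s => (x, s))).mul
      (hχC1.continuous.comp (by fun_prop : Continuous fun s => (t, s)))).intervalIntegrable _ _
  refine ⟨fun i => (hψC1 i).add (cI i), hχC1.add cI₄, ?_, ?_, ?_, ?_⟩
  · intro i t x ht hx hxL
    have T := transport_volterra_integral (c := γ i) hθ (hmC1 i) hhC (hgC i) (hg i) hψC1 hχC1
      hx hxL (fun y => hχpde t y ht)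
    have dt := ((hasDerivAt_fst_of_contDiff (hψC1 i) t x).add
      (hasDerivAt_fst_of_contDiff (cI i) t x)).deriv
    have dx := ((hasDerivAt_snd_of_contDiff (hψC1 i) t x).add
      (hasDerivAt_snd_of_contDiff (cI i) t x)).deriv
    have K : ∫ ξ in (0:ℝ)..x,
        (γ i * deriv (fun y => m i y ξ) x - μ * deriv (fun s => m i x s) ξ) * χ t ξ
        = (∑ j, σ i j * ∫ ξ in (0:ℝ)..x, m j x ξ * χ t ξ)
          + α i x * ∫ ξ in (0:ℝ)..x, m₄ x ξ * χ t ξ := by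
      have e : ∫ ξ in (0:ℝ)..x,
          (γ i * deriv (fun y => m i y ξ) x - μ * deriv (fun s => m i x s) ξ) * χ t ξ
          = ∫ ξ in (0:ℝ)..x, ((∑ j, σ i j * (m j x ξ * χ t ξ)) + α i x * (m₄ x ξ * χ t ξ)) := by
        refine intervalIntegral.integral_congr fun ξ hξ => ?_
        rw [Set.uIcc_of_le hx] at hξ
        rw [hmpde i x ξ hξ.1 hξ.2 hxL]
        simp only [Fin.sum_univ_three]
        ring
      simp only [Fin.sum_univ_three] at e ⊢
      rw [e, intervalIntegral.integral_add
          ((((im 0 t x).const_mul _).add ((im 1 t x).const_mul _)).add ((im 2 t x).const_mul _))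
          ((im₄ t x).const_mul _),
        intervalIntegral.integral_add
          (((im 0 t x).const_mul _).add ((im 1 t x).const_mul _)) ((im 2 t x).const_mul _),
        intervalIntegral.integral_add ((im 0 t x).const_mul _) ((im 1 t x).const_mul _)]
      simp only [intervalIntegral.integral_const_mul]
    have P := hψpde i t x ht hx hxL
    have D : (γ i + μ) * m i x x = α i x := by
      rw [hmdiag i x hx hxL]
      have := hγ i
      field_simp
    rw [K, D] at T
    simp only [intervalIntegral.integral_same, add_zero]
    refine (congrArg₂ (fun a b => a + γ i * b) dt dx).trans ?_
    simp only [Fin.sum_univ_three] at T P ⊢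
    linear_combination T + P
  · intro t x ht hx hxL
    have T := transport_volterra_integral (c := -μ) hθ hm₄C1 hhC hhC hh hψC1 hχC1
      hx hxL (fun y => hχpde t y ht)
    have dt := ((hasDerivAt_fst_of_contDiff hχC1 t x).add
      (hasDerivAt_fst_of_contDiff cI₄ t x)).deriv
    have dx := ((hasDerivAt_snd_of_contDiff hχC1 t x).add
      (hasDerivAt_snd_of_contDiff cI₄ t x)).deriv
    have K : ∫ ξ in (0:ℝ)..x,
        (-μ * deriv (fun y => m₄ y ξ) x - μ * deriv (fun s => m₄ x s) ξ) * χ t ξ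
        = ∑ j, θ j x * ∫ ξ in (0:ℝ)..x, m j x ξ * χ t ξ := by
      have e : ∫ ξ in (0:ℝ)..x,
          (-μ * deriv (fun y => m₄ y ξ) x - μ * deriv (fun s => m₄ x s) ξ) * χ t ξ
          = ∫ ξ in (0:ℝ)..x, ∑ j, θ j x * (m j x ξ * χ t ξ) := by
        refine intervalIntegral.integral_congr fun ξ hξ => ?_
        rw [Set.uIcc_of_le hx] at hξ
        have := hm₄pde x ξ hξ.1 hξ.2 hxL
        simp only [Fin.sum_univ_three] at this ⊢
        linear_combination (-χ t ξ) * this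
      rw [e, intervalIntegral.integral_finsetSum fun j _ => (im j t x).const_mul _]
      simp only [intervalIntegral.integral_const_mul]
    have P := hχpde t x ht hx hxL
    rw [K] at T
    simp only [intervalIntegral.integral_same, add_zero]
    refine (congrArg₂ (fun a b => a - μ * b) dt dx).trans ?_
    simp only [Fin.sum_univ_three] at T P ⊢
    linear_combination T + P
  · intro i t ht
    simp [hψbc i t ht]
  · intro t ht
    have e : ∫ ξ in (0:ℝ)..L, m₄ L ξ * χ t ξ
        = ∫ ξ in (0:ℝ)..L, (ρ₁ * (m 0 L ξ * χ t ξ) + ρ₂ * (m 1 L ξ * χ t ξ)) := by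
      refine intervalIntegral.integral_congr fun ξ hξ => ?_
      rw [Set.uIcc_of_le hL.le] at hξ
      rw [hm₄bc ξ hξ.1 hξ.2]
      ring
    rw [intervalIntegral.integral_add ((im 0 t L).const_mul _) ((im 1 t L).const_mul _),
      intervalIntegral.integral_const_mul, intervalIntegral.integral_const_mul] at e
    simp only
    rw [hχbc t ht, e]
    ring
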